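/- arXiv:1110.1963 — 2 statements merged into one kernel-verified Lean document; each statement's English description precedes it below -/
import Mathlib

section
/- Let d be a positive integer and let J ⊊ I be two nonzero square-free monomial ideals of S such that I is generated by square-free monomials of degree ≥ d and J is generated by square-free monomials of degree ≥ d+1. Then depth_S I ≥ d and depth_S (I/J) ≥ d. -/
open MvPolynomial

/-- The square-free monomial `∏ i ∈ T, X i` associated to a set `T` of variables. -/
noncomputable def sqMon (K : Type) [Field K] {n : ℕ} (T : Finset (Fin n)) :
    MvPolynomial (Fin n) K :=
  ∏ i ∈ T, X i

/-- `GenBySqMonOfDeg K P I` means: `I` is generated by square-free monomials whose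
degrees satisfy the predicate `P`. -/
def GenBySqMonOfDeg (K : Type) [Field K] {n : ℕ} (P : ℕ → Prop)
    (I : Ideal (MvPolynomial (Fin n) K)) : Prop :=
  ∃ G : Set (Finset (Fin n)), (∀ T ∈ G, P T.card) ∧ I = Ideal.span (sqMon K '' G)

/-- `rho K d I` : the number of square-free monomials of degree `d` belonging to `I`. -/
noncomputable def rho (K : Type) [Field K] {n : ℕ} (d : ℕ)
    (I : Ideal (MvPolynomial (Fin n) K)) : ℕ :=
  Set.ncard {T : Finset (Fin n) | T.card = d ∧ sqMon K T ∈ I}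

/-- The maximal graded ideal `(x_1, …, x_n)` of `K[x_1, …, x_n]`. -/
noncomputable def maxGraded (K : Type) [Field K] (n : ℕ) :
    Ideal (MvPolynomial (Fin n) K) :=
  Ideal.span (Set.range (X : Fin n → MvPolynomial (Fin n) K))

/-- The depth of the module `M` with respect to the ideal `I` : the supremum of the
lengths of `M`-regular sequences consisting of elements of `I`. -/
noncomputable def moduleDepth {R : Type} [CommRing R] (I : Ideal R)
    (M : Type) [AddCommGroup M] [Module R M] : ℕ∞ :=
  sSup {k : ℕ∞ | ∃ rs : List R, k = (rs.length : ℕ∞) ∧ (∀ r ∈ rs, r ∈ I) ∧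
    RingTheory.Sequence.IsRegular M rs}

/-- The `R`-module `I/J` (more precisely `I/(I ∩ J)`, which is `I/J` when `J ≤ I`). -/
noncomputable abbrev idealQuot {R : Type} [CommRing R] (I J : Ideal R) : Type :=
  ↥I ⧸ (Submodule.comap I.subtype (J : Submodule R R))

section Helpers
open RingTheory.Sequence

/-- complete homogeneous symmetric polynomials of a list -/
noncomputable def hL {R : Type*} [CommRing R] : List R → ℕ → R
  | [], 0 => 1
  | [], _ + 1 => 0
  | _ :: _, 0 => 1
  | x :: L, j + 1 => hL L (j + 1) + x * hL (x :: L) j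

lemma hL_zero {R : Type*} [CommRing R] (L : List R) : hL L 0 = 1 := by
  cases L <;> simp [hL]

lemma hL_succ {R : Type*} [CommRing R] (x : R) (L : List R) (j : ℕ) :
    hL (x :: L) (j + 1) = hL L (j + 1) + x * hL (x :: L) j := by
  simp [hL]

lemma hL_zero_cons {R : Type*} [CommRing R] (L : List R) (j : ℕ) : hL (0 :: L) j = hL L j := by
  cases j with
  | zero => simp [hL_zero]
  | succ j => simp [hL_succ]

lemma map_hL {R S : Type*} [CommRing R] [CommRing S] (f : R →+* S) (L : List R) (j : ℕ) :
    f (hL L j) = hL (L.map f) j := by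
  induction L generalizing j with
  | nil => cases j <;> simp [hL]
  | cons x L ih =>
    induction j with
    | zero => simp [hL_zero]
    | succ j ihj => 
      rw [hL_succ, List.map_cons, hL_succ, map_add, map_mul, ih, ihj, List.map_cons]

lemma hL_map_filter {R ι : Type*} [CommRing R] (f : ι → R) (p : ι → Prop) [DecidablePred p]
    (hf : ∀ i, ¬ p i → f i = 0) (l : List ι) (j : ℕ) :
    hL (l.map f) j = hL ((l.filter p).map f) j := by
  induction l generalizing j with
  | nil => rfl
  | cons x L ih =>
    by_cases hx : p x
    · simp only [hx, decide_true, List.filter_cons_of_pos, List.map_cons]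
      induction j with
      | zero => simp [hL_zero]
      | succ j ihj => rw [hL_succ, hL_succ, ih, ihj]
    · simp [hx, hf x hx, hL_zero_cons, ih]

lemma hL_mem {R : Type*} [CommRing R] (I : Ideal R) (L : List R) (hL' : ∀ x ∈ L, x ∈ I) (j : ℕ) :
    hL L (j + 1) ∈ I := by
  induction L with
  | nil => simp [hL]
  | cons x L ih =>
    rw [hL_succ]
    exact I.add_mem (ih fun y hy => hL' y (by simp [hy])) (I.mul_mem_right _ (hL' x (by simp)))

lemma hL_monic {A : Type*} [CommRing A] (L : List A) (j : ℕ) :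
    (hL (Polynomial.X :: L.map Polynomial.C) j).Monic := by
  nontriviality A
  suffices h : (hL (Polynomial.X :: L.map Polynomial.C) j).Monic ∧
      (hL (Polynomial.X :: L.map Polynomial.C) j).natDegree = j from h.1
  induction j with
  | zero => simp [hL_zero]
  | succ j ih =>
    obtain ⟨h1, h2⟩ := ih
    rw [hL_succ, ← map_hL]
    have h3 : (Polynomial.X * hL (Polynomial.X :: L.map Polynomial.C) j).Monic :=
      Polynomial.monic_X.mul h1
    have h4 : (Polynomial.X * hL (Polynomial.X :: L.map Polynomial.C) j).natDegree = j + 1 := by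
      rw [Polynomial.monic_X.natDegree_mul h1, h2, Polynomial.natDegree_X, add_comm]
    constructor
    · rw [add_comm]
      apply h3.add_of_left
      rw [Polynomial.degree_eq_natDegree h3.ne_zero, h4]
      exact lt_of_le_of_lt Polynomial.degree_C_le (by exact_mod_cast Nat.succ_pos j)
    · rw [Polynomial.natDegree_C_add, h4]

open scoped Pointwise in
lemma wreg_tri {R : Type*} {M : Type*} [CommRing R] [AddCommGroup M] [Module R M]
    (b c : ℕ → R) (x : R) (hc : ∀ i, c (i + 1) = b (i + 1) + x * c i) (m s : ℕ)
    (h0 : ∀ y : M, c s • y = 0)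
    (h : IsWeaklyRegular M ((List.range' (s + 1) m).map b)) :
    IsWeaklyRegular M ((List.range' (s + 1) m).map c) := by
  induction m generalizing s M with
  | zero => simp
  | succ m ih =>
    simp only [List.range'_succ, List.map_cons, isWeaklyRegular_cons_iff] at h ⊢
    have hb : ∀ y : M, c (s + 1) • y = b (s + 1) • y := fun y => by
      rw [hc, add_smul, mul_smul, h0, smul_zero, add_zero]
    refine ⟨fun y z hyz => h.1 (by simpa [hb] using hyz), ?_⟩
    apply ih
    · intro y
      obtain ⟨y, rfl⟩ := Submodule.mkQ_surjective _ y
      rw [← map_smul]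
      simp only [Submodule.mkQ_apply, Submodule.Quotient.mk_eq_zero]
      exact Submodule.smul_mem_pointwise_smul _ _ _ trivial
    · have e : (b (s+1) • ⊤ : Submodule R M) = c (s+1) • ⊤ := by
        ext y
        simp [Submodule.mem_smul_pointwise_iff_exists, hb]
      exact ((Submodule.quotEquivOfEq _ _ e).isWeaklyRegular_congr _).1 h.2

lemma wreg_ses {R : Type*} {M₁ M₂ M₃ : Type*} [CommRing R] [AddCommGroup M₁] [Module R M₁]
    [AddCommGroup M₂] [Module R M₂] [AddCommGroup M₃] [Module R M₃]
    (f : M₁ →ₗ[R] M₂) (g : M₂ →ₗ[R] M₃) (hf : Function.Injective f)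
    (hfg : Function.Exact f g) (hg : Function.Surjective g) (rs : List R)
    (h1 : IsWeaklyRegular M₁ rs) (h3 : IsWeaklyRegular M₃ rs) : IsWeaklyRegular M₂ rs := by
  induction rs generalizing M₁ M₂ M₃ with
  | nil => simp
  | cons r rs ih =>
    rw [isWeaklyRegular_cons_iff] at h1 h3 ⊢
    refine ⟨isSMulRegular_of_range_eq_ker hf (LinearMap.exact_iff.1 hfg).symm h1.1 h3.1, ?_⟩
    refine ih (QuotSMulTop.map r f) (QuotSMulTop.map r g) ?_ ?_ ?_ h1.2 h3.2
    · have := QuotSMulTop.map_first_exact_on_four_term_exact_of_isSMulRegular_last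
        (r := r) (f₁ := (0 : M₁ →ₗ[R] M₁)) (f₂ := f) (f₃ := g)
        (by rw [LinearMap.exact_zero_iff_injective]; exact hf) hfg h3.1
      rw [map_zero] at this
      exact (LinearMap.exact_zero_iff_injective _ _).1 this
    · exact QuotSMulTop.map_exact r hfg hg
    · exact QuotSMulTop.map_surjective r hg

open scoped Pointwise in
lemma wreg_poly (R : Type*) [CommRing R] (k j m : ℕ) (hm : m ≤ k) :
    IsWeaklyRegular (MvPolynomial (Fin k) R) ((List.range' (j + 1) m).map
      (hL ((List.finRange k).map (X : Fin k → MvPolynomial (Fin k) R)))) := by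
  induction k generalizing j m with
  | zero => obtain rfl : m = 0 := by omega
            simp
  | succ k ih =>
    cases m with
    | zero => simp
    | succ m =>
    set A := MvPolynomial (Fin k) R
    set L' : List A := (List.finRange k).map X
    have key : IsWeaklyRegular (Polynomial A) ((List.range' (j + 1) (m + 1)).map
      (hL (Polynomial.X :: L'.map Polynomial.C))) := by
      set c := hL (Polynomial.X :: L'.map Polynomial.C) with hcdef
      have hmon : (c (j + 1)).Monic := hL_monic _ _
      rw [List.range'_succ, List.map_cons, isWeaklyRegular_cons_iff]
      constructor
      · intro y z hyz
        exact hmon.isRegular.left hyz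
      · refine wreg_tri (fun i => Polynomial.C (hL L' i)) c Polynomial.X ?_ m (j + 1) ?_ ?_
        · intro i
          rw [hcdef, hL_succ, map_hL]
        · intro y
          obtain ⟨y, rfl⟩ := Submodule.mkQ_surjective _ y
          rw [← map_smul]
          simp only [Submodule.mkQ_apply, Submodule.Quotient.mk_eq_zero]
          exact Submodule.smul_mem_pointwise_smul _ _ _ trivial
        · have := hmon.free_adjoinRoot
          have h := (ih (j + 1) m (by omega)).of_flat (S := AdjoinRoot (c (j + 1)))
          have e : (Ideal.span {c (j+1)} : Submodule (Polynomial A) (Polynomial A))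
              = c (j+1) • ⊤ := by
            ext y
            simp [Submodule.mem_smul_pointwise_iff_exists, Ideal.mem_span_singleton', mul_comm]
          let E : AdjoinRoot (c (j + 1)) ≃+ QuotSMulTop (c (j+1)) (Polynomial A) :=
            (Submodule.quotEquivOfEq _ _ e).toAddEquiv
          refine (AddEquiv.isWeaklyRegular_congr (e := E) ?_).1 h
          rw [List.map_map, List.forall₂_map_left_iff, List.forall₂_map_right_iff,
            List.forall₂_same]
          intro i _ x
          obtain ⟨x, rfl⟩ := AdjoinRoot.mk_surjective x
          rfl
    refine (AddEquiv.isWeaklyRegular_congr (e := (finSuccEquiv R k).toAddEquiv) ?_).2 key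
    rw [List.forall₂_map_left_iff, List.forall₂_map_right_iff, List.forall₂_same]
    intro i _ x
    have : (finSuccEquiv R k) (hL ((List.finRange (k+1)).map X) i)
        = hL (Polynomial.X :: L'.map Polynomial.C) i := by
      have := map_hL (finSuccEquiv R k : MvPolynomial (Fin (k+1)) R →+* Polynomial A)
        ((List.finRange (k+1)).map X) i
      simp only [List.finRange_succ, List.map_cons, List.map_map] at this ⊢
      refine this.trans ?_
      congr 2
      · exact finSuccEquiv_X_zero
      · simp only [L', List.map_map]
        apply List.map_congr_left
        intro a _
        exact finSuccEquiv_X_succ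
    rw [← this]
    simp

lemma filter_finRange {n : ℕ} (T : Finset (Fin n)) :
    (List.finRange n).filter (· ∈ T) = (List.finRange T.card).map (T.orderEmbOfFin rfl) := by
  apply List.Perm.eq_of_pairwise' (r := (· < ·))
  · exact List.Pairwise.filter _ (List.pairwise_lt_finRange n)
  · rw [List.pairwise_map]
    exact (List.pairwise_lt_finRange _).imp (fun h => by simpa using h)
  · rw [List.perm_ext_iff_of_nodup ((List.nodup_finRange n).filter _)
      ((List.nodup_finRange _).map (T.orderEmbOfFin rfl).injective)]
    intro a
    have := T.range_orderEmbOfFin rfl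
    have h2 : a ∈ Set.range (T.orderEmbOfFin rfl) ↔ a ∈ (T : Set (Fin n)) := by rw [this]
    simpa using h2.symm

/-- restriction to the variables in `T` -/
noncomputable def rhoT (K : Type) [Field K] {n : ℕ} (T : Finset (Fin n)) :
    MvPolynomial (Fin n) K →ₐ[K] MvPolynomial (Fin T.card) K :=
  aeval (fun i => if h : i ∈ T then X ((T.orderIsoOfFin rfl).symm ⟨i, h⟩) else 0)

/-- inclusion of the variables in `T` -/
noncomputable def iotaT (K : Type) [Field K] {n : ℕ} (T : Finset (Fin n)) :
    MvPolynomial (Fin T.card) K →ₐ[K] MvPolynomial (Fin n) K :=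
  rename (T.orderEmbOfFin rfl)

lemma rhoT_X_not {K : Type} [Field K] {n : ℕ} {T : Finset (Fin n)} {i : Fin n} (h : i ∉ T) :
    rhoT K T (X i) = 0 := by
  simp [rhoT, h]

lemma rhoT_X_emb {K : Type} [Field K] {n : ℕ} {T : Finset (Fin n)} (j : Fin T.card) :
    rhoT K T (X (T.orderEmbOfFin rfl j)) = X j := by
  simp only [rhoT, aeval_X]
  rw [dif_pos (T.orderEmbOfFin_mem rfl j)]
  congr 1
  rw [OrderIso.symm_apply_eq]
  ext
  simp

lemma rhoT_iotaT {K : Type} [Field K] {n : ℕ} (T : Finset (Fin n))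
    (p : MvPolynomial (Fin T.card) K) : rhoT K T (iotaT K T p) = p := by
  have : (rhoT K T).comp (iotaT K T) = AlgHom.id K _ := by
    ext j : 1
    simp only [AlgHom.comp_apply, iotaT, rename_X, rhoT_X_emb, AlgHom.id_apply]
  exact DFunLike.congr_fun this p

lemma iotaT_rhoT_X {K : Type} [Field K] {n : ℕ} {T : Finset (Fin n)} {i : Fin n} (h : i ∈ T) :
    iotaT K T (rhoT K T (X i)) = X i := by
  simp only [rhoT, aeval_X]
  rw [dif_pos h, iotaT, rename_X, ← Finset.coe_orderIsoOfFin_apply]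
  simp

lemma rhoT_sqMon_ne {K : Type} [Field K] {n : ℕ} (T : Finset (Fin n)) :
    rhoT K T (sqMon K T) ≠ 0 := by
  intro h
  have h2 := congrArg (iotaT K T) h
  rw [sqMon, map_prod, map_prod, map_zero, Finset.prod_congr rfl (fun i hi => iotaT_rhoT_X hi),
    Finset.prod_eq_zero_iff] at h2
  obtain ⟨i, _, hi⟩ := h2
  exact X_ne_zero i hi

lemma rhoT_sqMon_not {K : Type} [Field K] {n : ℕ} {T V : Finset (Fin n)} (h : ¬ V ⊆ T) :
    rhoT K T (sqMon K V) = 0 := by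
  obtain ⟨i, hi, hiT⟩ := Finset.not_subset.1 h
  rw [sqMon, map_prod]
  exact Finset.prod_eq_zero hi (rhoT_X_not hiT)

lemma rhoT_span {K : Type} [Field K] {n : ℕ} {T : Finset (Fin n)} {G : Set (Finset (Fin n))}
    (h : ∀ V ∈ G, ¬ V ⊆ T) {p : MvPolynomial (Fin n) K} (hp : p ∈ Ideal.span (sqMon K '' G)) :
    rhoT K T p = 0 := by
  have : Ideal.span (sqMon K '' G) ≤ RingHom.ker (rhoT K T) := by
    rw [Ideal.span_le]
    rintro _ ⟨V, hV, rfl⟩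
    exact rhoT_sqMon_not (h V hV)
  exact this hp

lemma ker_rhoT_le {K : Type} [Field K] {n : ℕ} {T : Finset (Fin n)}
    {Q : Ideal (MvPolynomial (Fin n) K)} (hQ : ∀ i ∉ T, X i ∈ Q)
    {p : MvPolynomial (Fin n) K} (hp : rhoT K T p = 0) : p ∈ Q := by
  have : ((Ideal.Quotient.mkₐ K Q).comp (iotaT K T)).comp (rhoT K T) = Ideal.Quotient.mkₐ K Q := by
    ext i : 1
    by_cases hi : i ∈ T
    · simp only [AlgHom.comp_apply, iotaT_rhoT_X hi]
    · simp only [AlgHom.comp_apply, rhoT_X_not hi, map_zero]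
      exact (Ideal.Quotient.eq_zero_iff_mem.2 (hQ i hi)).symm
  have h2 := DFunLike.congr_fun this p
  simp only [AlgHom.comp_apply, hp, map_zero] at h2
  exact Ideal.Quotient.eq_zero_iff_mem.1 h2.symm

/-- the regular sequence -/
noncomputable def hseq (K : Type) [Field K] (n d : ℕ) : List (MvPolynomial (Fin n) K) :=
  (List.range' 1 d).map (hL ((List.finRange n).map X))

lemma rhoT_hL {K : Type} [Field K] {n : ℕ} (T : Finset (Fin n)) (j : ℕ) :
    rhoT K T (hL ((List.finRange n).map X) j) = hL ((List.finRange T.card).map X) j := by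
  have h := map_hL (rhoT K T : MvPolynomial (Fin n) K →+* MvPolynomial (Fin T.card) K) ((List.finRange n).map X) j
  refine h.trans ?_
  rw [List.map_map, hL_map_filter _ (· ∈ T) (fun i hi => by exact rhoT_X_not hi), filter_finRange,
    List.map_map]
  congr 1
  apply List.map_congr_left
  intro a _
  exact rhoT_X_emb a

lemma wreg_ker (K : Type) [Field K] {n d : ℕ} (T : Finset (Fin n)) (hd : d ≤ T.card) :
    IsWeaklyRegular (MvPolynomial (Fin n) K ⧸ RingHom.ker (rhoT K T)) (hseq K n d) := by
  have hs : Function.Surjective (rhoT K T) := fun p => ⟨_, rhoT_iotaT T p⟩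
  refine (AddEquiv.isWeaklyRegular_congr
    (e := (Ideal.quotientKerAlgEquivOfSurjective hs).toAddEquiv) ?_).2
    (wreg_poly K T.card 0 d hd)
  rw [hseq, List.forall₂_map_left_iff, List.forall₂_map_right_iff, List.forall₂_same]
  intro i _ x
  rw [← rhoT_hL]
  obtain ⟨x, rfl⟩ := Ideal.Quotient.mk_surjective x
  exact map_mul (rhoT K T) _ _

lemma wreg_step {K : Type} [Field K] {n d : ℕ} (T : Finset (Fin n)) (hd : d ≤ T.card)
    (I I' : Ideal (MvPolynomial (Fin n) K)) (hI : I = I' ⊔ Ideal.span {sqMon K T})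
    (h1 : ∀ i ∉ T, X i * sqMon K T ∈ I') (h2 : ∀ p ∈ I', rhoT K T p = 0) :
    IsWeaklyRegular (idealQuot I I') (hseq K n d) := by
  have hT : sqMon K T ∈ I := by
    rw [hI]; exact Ideal.mem_sup_right (Ideal.mem_span_singleton_self _)
  let f : MvPolynomial (Fin n) K →ₗ[MvPolynomial (Fin n) K] idealQuot I I' :=
    LinearMap.toSpanSingleton _ _ (Submodule.Quotient.mk ⟨sqMon K T, hT⟩)
  have hf : ∀ p, f p = Submodule.Quotient.mk (p • ⟨sqMon K T, hT⟩) := fun p => rfl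
  have hker : LinearMap.ker f = RingHom.ker (rhoT K T) := by
    ext p
    rw [LinearMap.mem_ker, hf, Submodule.Quotient.mk_eq_zero, RingHom.mem_ker]
    change p * sqMon K T ∈ I' ↔ _
    constructor
    · intro h
      have := h2 _ h
      rw [map_mul] at this
      exact (mul_eq_zero.1 this).resolve_right (rhoT_sqMon_ne T)
    · intro h
      have := ker_rhoT_le (Q := Submodule.comap (LinearMap.mulRight (MvPolynomial (Fin n) K)
        (sqMon K T)) I') (fun i hi => h1 i hi) h
      exact this
  have hsurj : Function.Surjective f := by
    intro y
    obtain ⟨⟨y, hy⟩, rfl⟩ := Submodule.Quotient.mk_surjective _ y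
    have hy' := hy
    rw [hI, Submodule.mem_sup] at hy'
    obtain ⟨a, ha, b, hb, rfl⟩ := hy'
    obtain ⟨p, rfl⟩ := Ideal.mem_span_singleton'.1 hb
    refine ⟨p, ?_⟩
    rw [hf, Submodule.Quotient.eq]
    change p * sqMon K T - (a + p * sqMon K T) ∈ I'
    simpa using ha
  exact (((Submodule.quotEquivOfEq _ _ hker).symm.trans
    (f.quotKerEquivOfSurjective hsurj)).isWeaklyRegular_congr _).1 (wreg_ker K T hd)

lemma wreg_filt {R : Type} [CommRing R] {J I' I : Ideal R} (h1 : J ≤ I') (h2 : I' ≤ I)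
    (rs : List R) (w1 : IsWeaklyRegular (idealQuot I' J) rs)
    (w2 : IsWeaklyRegular (idealQuot I I') rs) : IsWeaklyRegular (idealQuot I J) rs := by
  refine wreg_ses (Submodule.mapQ _ _ (Submodule.inclusion h2) (fun x hx => hx))
    (Submodule.mapQ _ _ LinearMap.id (fun x hx => h1 hx)) ?_ ?_ ?_ rs w1 w2
  · rw [injective_iff_map_eq_zero]
    intro y hy
    obtain ⟨y, rfl⟩ := Submodule.Quotient.mk_surjective _ y
    rw [Submodule.mapQ_apply, Submodule.Quotient.mk_eq_zero] at hy
    rw [Submodule.Quotient.mk_eq_zero]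
    exact hy
  · intro y
    obtain ⟨y, rfl⟩ := Submodule.Quotient.mk_surjective _ y
    rw [Submodule.mapQ_apply, Submodule.Quotient.mk_eq_zero]
    constructor
    · intro hy
      exact ⟨Submodule.Quotient.mk ⟨y.1, hy⟩, rfl⟩
    · rintro ⟨z, hz⟩
      obtain ⟨z, rfl⟩ := Submodule.Quotient.mk_surjective _ z
      rw [Submodule.mapQ_apply, Submodule.Quotient.eq] at hz
      have h3 : (z : R) - y ∈ J := hz
      have : (y : R) = z - (z - y) := by ring
      change (y : R) ∈ I'
      rw [this]
      exact I'.sub_mem z.2 (h1 h3)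
  · intro y
    obtain ⟨y, rfl⟩ := Submodule.Quotient.mk_surjective _ y
    exact ⟨Submodule.Quotient.mk y, rfl⟩

lemma wreg_subsingleton {R M : Type} [CommRing R] [AddCommGroup M] [Module R M] [Subsingleton M]
    (rs : List R) : IsWeaklyRegular M rs := by
  rw [isWeaklyRegular_iff_Fin]
  intro i x y _
  have : Subsingleton (M ⧸ (Ideal.ofList (rs.take i) • ⊤ : Submodule R M)) :=
    (Submodule.mkQ_surjective _).subsingleton
  exact Subsingleton.elim _ _

lemma sqMon_mul_of_subset {K : Type} [Field K] {n : ℕ} {A B : Finset (Fin n)} (h : A ⊆ B) :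
    sqMon K A ∣ sqMon K B := Finset.prod_dvd_prod_of_subset _ _ _ h

lemma wreg_main {K : Type} [Field K] {n d : ℕ} (V U : Finset (Finset (Fin n)))
    (hVU : V ⊆ U) (hV : IsUpperSet (V : Set (Finset (Fin n))))
    (hU : IsUpperSet (U : Set (Finset (Fin n)))) (hd : ∀ T ∈ U, d ≤ T.card) :
    IsWeaklyRegular (idealQuot (Ideal.span (sqMon K '' (U : Set (Finset (Fin n)))))
      (Ideal.span (sqMon K '' (V : Set (Finset (Fin n)))))) (hseq K n d) := by
  induction hN : U.card generalizing U with
  | zero =>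
    obtain rfl : U = ∅ := Finset.card_eq_zero.1 hN
    obtain rfl : V = ∅ := Finset.subset_empty.1 hVU
    have : Subsingleton (idealQuot (Ideal.span (sqMon K '' ((∅ : Finset (Finset (Fin n))) : Set (Finset (Fin n)))))
      (Ideal.span (sqMon K '' ((∅ : Finset (Finset (Fin n))) : Set (Finset (Fin n)))))) := by
      rw [Submodule.Quotient.subsingleton_iff, eq_top_iff]
      exact fun x _ => x.2
    exact wreg_subsingleton _
  | succ N ih =>
    by_cases hUV : U ⊆ V
    · obtain rfl : U = V := Finset.Subset.antisymm hUV hVU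
      have : Subsingleton (idealQuot (Ideal.span (sqMon K '' (U : Set (Finset (Fin n)))))
        (Ideal.span (sqMon K '' (U : Set (Finset (Fin n)))))) := by
        rw [Submodule.Quotient.subsingleton_iff, eq_top_iff]
        exact fun x _ => x.2
      exact wreg_subsingleton _
    · have hne : (U \ V).Nonempty := by
        rwa [Finset.sdiff_nonempty]
      obtain ⟨T, hT⟩ := (U \ V).exists_minimal hne
      have hTU : T ∈ U := (Finset.mem_sdiff.1 hT.1).1
      have hTV : T ∉ V := (Finset.mem_sdiff.1 hT.1).2
      have hmin : ∀ W ∈ U, W ⊆ T → W = T := by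
        intro W hW hWT
        have hWV : W ∉ V := fun h => hTV (hV hWT h)
        exact le_antisymm hWT (hT.2 (Finset.mem_sdiff.2 ⟨hW, hWV⟩) hWT)
      have hVU' : V ⊆ U.erase T := fun W hW =>
        Finset.mem_erase.2 ⟨fun h => hTV (h ▸ hW), hVU hW⟩
      have hU' : IsUpperSet ((U.erase T : Finset _) : Set (Finset (Fin n))) := by
        intro A B hAB hA
        have hA' := Finset.mem_erase.1 (Finset.mem_coe.1 hA)
        refine Finset.mem_coe.2 (Finset.mem_erase.2 ⟨?_, hU hAB hA'.2⟩)
        rintro rfl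
        exact hA'.1 (hmin A hA'.2 hAB)
      refine wreg_filt (I' := Ideal.span (sqMon K '' ((U.erase T : Finset _) : Set (Finset (Fin n)))))
        (Ideal.span_mono (Set.image_mono (by exact_mod_cast hVU')))
        (Ideal.span_mono (Set.image_mono (by exact_mod_cast Finset.erase_subset _ _))) _
        (ih (U.erase T) hVU' hU' (fun W hW => hd W (Finset.mem_of_mem_erase hW)) 
          (by rw [Finset.card_erase_of_mem hTU, hN]; rfl)) ?_
      apply wreg_step T (hd T hTU)
      · rw [← Ideal.span_union, ← Set.image_singleton, ← Set.image_union]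
        congr 2
        ext W
        simp only [Finset.mem_coe, Finset.coe_erase, Set.mem_union, Set.mem_sdiff,
          Set.mem_singleton_iff]
        by_cases h : W = T <;> simp [h, hTU]
      · intro i hi
        have : X i * sqMon K T = sqMon K (insert i T) := by
          rw [sqMon, sqMon, Finset.prod_insert hi]
        rw [this]
        apply Ideal.subset_span
        refine ⟨_, Finset.mem_coe.2 (Finset.mem_erase.2 ⟨?_, ?_⟩), rfl⟩
        · intro h
          exact hi (h ▸ Finset.mem_insert_self i T)
        · exact hU (Finset.subset_insert i T) hTU
      · intro p hp
        refine rhoT_span ?_ hp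
        intro W hW hWT
        have hW' := Finset.mem_erase.1 (Finset.mem_coe.1 hW)
        exact hW'.1 (hmin W hW'.2 hWT)

open Classical in
/-- the set of squarefree monomials in `I` -/
noncomputable def upSet {K : Type} [Field K] {n : ℕ} (I : Ideal (MvPolynomial (Fin n) K)) :
    Finset (Finset (Fin n)) := Finset.univ.filter (fun T => sqMon K T ∈ I)

lemma mem_upSet {K : Type} [Field K] {n : ℕ} {I : Ideal (MvPolynomial (Fin n) K)}
    {T : Finset (Fin n)} : T ∈ upSet I ↔ sqMon K T ∈ I := by simp [upSet]

lemma upSet_upper {K : Type} [Field K] {n : ℕ} (I : Ideal (MvPolynomial (Fin n) K)) :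
    IsUpperSet (upSet I : Set (Finset (Fin n))) := by
  intro A B hAB hA
  rw [Finset.mem_coe, mem_upSet] at *
  exact Ideal.mem_of_dvd _ (sqMon_mul_of_subset hAB) hA

lemma span_upSet {K : Type} [Field K] {n : ℕ} {P : ℕ → Prop}
    {I : Ideal (MvPolynomial (Fin n) K)} (hI : GenBySqMonOfDeg K P I) :
    Ideal.span (sqMon K '' (upSet I : Set (Finset (Fin n)))) = I := by
  apply le_antisymm
  · rw [Ideal.span_le]
    rintro _ ⟨T, hT, rfl⟩
    exact mem_upSet.1 hT
  · obtain ⟨G, _, hG⟩ := hI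
    conv_lhs => rw [hG]
    apply Ideal.span_mono
    apply Set.image_mono
    intro T hT
    rw [Finset.mem_coe, mem_upSet, hG]
    exact Ideal.subset_span ⟨T, hT, rfl⟩

lemma card_upSet {K : Type} [Field K] {n d : ℕ}
    {I : Ideal (MvPolynomial (Fin n) K)} (hI : GenBySqMonOfDeg K (fun k => d ≤ k) I) 
    {T : Finset (Fin n)} (hT : T ∈ upSet I) : d ≤ T.card := by
  obtain ⟨G, hG1, hG⟩ := hI
  rw [mem_upSet, hG] at hT
  by_contra hlt
  refine rhoT_sqMon_ne T (rhoT_span (fun V hV hVT => hlt ?_) hT)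
  exact (hG1 V hV).trans (Finset.card_le_card hVT)

lemma depth_main {K : Type} [Field K] {n d : ℕ} {P : ℕ → Prop}
    (I J : Ideal (MvPolynomial (Fin n) K)) (hJI : J < I)
    (hI : GenBySqMonOfDeg K (fun k => d ≤ k) I)
    (hJ : GenBySqMonOfDeg K P J) :
    (∀ r ∈ hseq K n d, r ∈ maxGraded K n) ∧ IsRegular (idealQuot I J) (hseq K n d) := by
  have hmem : ∀ r ∈ hseq K n d, r ∈ maxGraded K n := by
    intro r hr
    obtain ⟨j, hj, rfl⟩ := List.mem_map.1 hr
    obtain ⟨j, rfl⟩ : ∃ i, j = i + 1 := ⟨j - 1, by simp [List.mem_range'] at hj; omega⟩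
    apply hL_mem
    intro x hx
    obtain ⟨i, _, rfl⟩ := List.mem_map.1 hx
    exact Ideal.subset_span ⟨i, rfl⟩
  refine ⟨hmem, ?_, ?_⟩
  · have := wreg_main (K := K) (d := d) (upSet J) (upSet I)
      (fun T hT => mem_upSet.2 (hJI.le (mem_upSet.1 hT))) (upSet_upper J) (upSet_upper I)
      (fun T hT => card_upSet hI hT)
    rwa [span_upSet hI, span_upSet hJ] at this
  · intro htop
    have hle : (⊤ : Submodule (MvPolynomial (Fin n) K) (idealQuot I J)) ≤ maxGraded K n • ⊤ := by
      conv_lhs => rw [htop]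
      exact Submodule.smul_mono_left (Ideal.span_le.2 hmem)
    have hfin : Module.Finite (MvPolynomial (Fin n) K) (idealQuot I J) := inferInstance
    obtain ⟨r, hr, hr2⟩ := Submodule.exists_sub_one_mem_and_smul_eq_zero_of_fg_of_le_smul
      _ _ hfin.1 hle
    obtain ⟨T, hTI, hTJ⟩ : ∃ T, T ∈ upSet I ∧ T ∉ upSet J := by
      by_contra! hcon
      refine hJI.not_ge ?_
      rw [← span_upSet hI, ← span_upSet hJ]
      exact Ideal.span_mono (Set.image_mono hcon)
    have h1 := hr2 (Submodule.Quotient.mk ⟨sqMon K T, mem_upSet.1 hTI⟩) trivial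
    rw [← Submodule.Quotient.mk_smul, Submodule.Quotient.mk_eq_zero] at h1
    have h2 : r * sqMon K T ∈ J := h1
    rw [← span_upSet hJ] at h2
    have h3 := rhoT_span (T := T) (fun V hV hVT => hTJ (upSet_upper J hVT hV)) h2
    rw [map_mul] at h3
    have h4 := (mul_eq_zero.1 h3).resolve_right (rhoT_sqMon_ne T)
    have hm : maxGraded K n ≤ (RingHom.ker (constantCoeff (σ := Fin n) (R := K))) := by
      rw [maxGraded, Ideal.span_le]
      rintro _ ⟨i, rfl⟩
      simp
    have h5 : constantCoeff r = 1 := by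
      have := hm hr
      rw [RingHom.mem_ker, map_sub, map_one, sub_eq_zero] at this
      exact this
    have h6 : r ∈ maxGraded K n :=
      ker_rhoT_le (T := T) (Q := maxGraded K n) (fun i _ => Ideal.subset_span ⟨i, rfl⟩) h4
    have h7 := hm h6
    rw [RingHom.mem_ker, h5] at h7
    exact one_ne_zero h7

end Helpers

/-- Lemma 1.1. -/
theorem stmt_0 (n : ℕ) (K : Type) [Field K] (d : ℕ) (hd : 0 < d)
    (I J : Ideal (MvPolynomial (Fin n) K)) (hJ0 : J ≠ ⊥) (hJI : J < I)
    (hI : GenBySqMonOfDeg K (fun k => d ≤ k) I)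
    (hJ : GenBySqMonOfDeg K (fun k => d + 1 ≤ k) J) :
    (d : ℕ∞) ≤ moduleDepth (maxGraded K n) ↥I ∧
      (d : ℕ∞) ≤ moduleDepth (maxGraded K n) (idealQuot I J) := by
  have hlen : (hseq K n d).length = d := by simp [hseq]
  constructor
  · have hb : (⊥ : Ideal (MvPolynomial (Fin n) K)) < I := bot_le.trans_lt hJI
    obtain ⟨h1, h2⟩ := depth_main (P := fun _ => True) I ⊥ hb hI
      ⟨∅, by simp, by simp⟩
    refine le_sSup ⟨hseq K n d, by rw [hlen], h1, ?_⟩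
    have e : Submodule.comap I.subtype (⊥ : Submodule (MvPolynomial (Fin n) K) _) = ⊥ := by
      ext x
      simp
    exact ((Submodule.quotEquivOfEqBot _ e).isRegular_congr _).1 h2
  · obtain ⟨h1, h2⟩ := depth_main I J hJI hI hJ
    exact le_sSup ⟨hseq K n d, by rw [hlen], h1, h2⟩
end

section
/- Let d be a positive integer, I a nonzero square-free monomial ideal generated by square-free monomials of degree ≥ d, and J ⊊ I a nonzero square-free monomial ideal with J = E + F, where F ⊄ E, E is an ideal generated by square-free monomials of degree d+1 and F is an ideal generated by square-free monomials of degree > d+1. Then depth_S (I/J) = d if and only if depth_S (I/E) = d. -/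
open MvPolynomial

section Homological
open CategoryTheory CategoryTheory.Abelian

/-- The residue module. -/
noncomputable abbrev resMod {R : Type} [CommRing R] (m : Ideal R) : ModuleCat.{0} R :=
  ModuleCat.of R (Shrink.{0} (R ⧸ m))

/-- Vanishing of the low Ext groups. -/
def EV {R : Type} [CommRing R] (m : Ideal R) (k : ℕ)
    (M : Type) [AddCommGroup M] [Module R M] : Prop :=
  ∀ i < k, Subsingleton (Ext (resMod m) (ModuleCat.of R M) i)

variable {R : Type} [CommRing R] {m : Ideal R}
  {A B C : Type} [AddCommGroup A] [Module R A] [AddCommGroup B] [Module R B]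
  [AddCommGroup C] [Module R C]

lemma EV.mono {k l : ℕ} (h : EV m l A) (hk : k ≤ l) : EV m k A :=
  fun i hi => h i (by omega)

lemma EV.of_subsingleton [Subsingleton A] (k : ℕ) : EV m k A := by
  intro i _
  refine ⟨fun a b => ?_⟩
  have h0 : (𝟙 (ModuleCat.of R A)) = 0 := by
    ext x; exact Subsingleton.elim (α := A) _ _
  rw [← Ext.comp_mk₀_id a, ← Ext.comp_mk₀_id b, h0]
  simp

lemma sexact (f : A →ₗ[R] B) (g : B →ₗ[R] C) (hf : Function.Injective f)
    (hg : Function.Surjective g) (h : Function.Exact f g) :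
    (ModuleCat.shortComplexOfCompEqZero f g h.linearMap_comp_eq_zero).ShortExact :=
  ModuleCat.shortComplex_shortExact _ h hf hg

lemma EV.middle {k : ℕ} (f : A →ₗ[R] B) (g : B →ₗ[R] C) (hf : Function.Injective f)
    (hg : Function.Surjective g) (h : Function.Exact f g) (hA : EV m k A) (hC : EV m k C) :
    EV m k B := by
  intro i hi
  have hS := sexact f g hf hg h
  refine subsingleton_of_forall_eq 0 fun e => ?_
  have := hA i hi
  have := hC i hi
  obtain ⟨x, hx⟩ := Ext.covariant_sequence_exact₂ (resMod m) hS e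
    (Subsingleton.elim (α := Ext (resMod m) (ModuleCat.of R C) i) _ _)
  have hx0 : x = 0 := Subsingleton.elim (α := Ext (resMod m) (ModuleCat.of R A) i) _ _
  rw [← hx, hx0]; simp

lemma EV.right {k : ℕ} (f : A →ₗ[R] B) (g : B →ₗ[R] C) (hf : Function.Injective f)
    (hg : Function.Surjective g) (h : Function.Exact f g) (hA : EV m (k + 1) A) (hB : EV m k B) :
    EV m k C := by
  intro i hi
  have hS := sexact f g hf hg h
  refine subsingleton_of_forall_eq 0 fun e => ?_
  have := hA (i + 1) (by omega)
  have := hB i hi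
  obtain ⟨x, hx⟩ := Ext.covariant_sequence_exact₃ (resMod m) hS e rfl
    (Subsingleton.elim (α := Ext (resMod m) (ModuleCat.of R A) (i + 1)) _ _)
  have hx0 : x = 0 := Subsingleton.elim (α := Ext (resMod m) (ModuleCat.of R B) i) _ _
  rw [← hx, hx0]; simp

lemma ann_resMod {r : R} (hr : r ∈ m) : r ∈ Module.annihilator R (resMod m) := by
  have : Module.annihilator R (Shrink.{0} (R ⧸ m)) = m := by
    rw [(Shrink.linearEquiv R (R ⧸ m)).annihilator_eq, Ideal.annihilator_quotient]
  change r ∈ Module.annihilator R (Shrink.{0} (R ⧸ m))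
  rwa [this]

lemma EV.succ {k : ℕ} (r : R) (hr : r ∈ m) (g : A →ₗ[R] C)
    (hf : Function.Injective (LinearMap.lsmul R A r))
    (hg : Function.Surjective g) (h : Function.Exact (LinearMap.lsmul R A r) g) (hC : EV m k C) :
    EV m (k + 1) A := by
  intro i hi
  have hS := sexact _ g hf hg h
  refine subsingleton_of_forall_eq 0 fun e => ?_
  have key : e.comp (Ext.mk₀ (r • 𝟙 (ModuleCat.of R A))) (add_zero i) = 0 := by
    have := Ext.postcomp_smul_id_eq_zero_of_mem_annihilator (M := ModuleCat.of R A)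
      (ann_resMod hr) i
    exact congrArg (fun F => F.hom e) this
  have hfe : (ModuleCat.shortComplexOfCompEqZero (LinearMap.lsmul R A r) g
    h.linearMap_comp_eq_zero).f = r • 𝟙 (ModuleCat.of R A) := rfl
  cases i with
  | zero =>
    have := hS.mono_f
    refine Ext.postcomp_mk₀_injective_of_mono (resMod m) (ModuleCat.shortComplexOfCompEqZero (LinearMap.lsmul R A r) g
      h.linearMap_comp_eq_zero).f ?_
    simp only [AddMonoidHom.flip_apply, map_zero]
    exact key
  | succ i =>
    have := hC i (by omega)
    obtain ⟨x, hx⟩ := Ext.covariant_sequence_exact₁ (resMod m) hS e key rfl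
    have hx0 : x = 0 := Subsingleton.elim (α := Ext (resMod m) (ModuleCat.of R C) i) _ _
    rw [← hx, hx0]; simp

lemma exists_reg_iff [IsNoetherianRing R] [Module.Finite R A] (hm : m • (⊤ : Submodule R A) < ⊤)
    (k : ℕ) : EV m k A ↔ ∃ rs : List R, rs.length = k ∧ (∀ r ∈ rs, r ∈ m) ∧
      RingTheory.Sequence.IsRegular A rs :=
  (ModuleCat.exists_isRegular_tfae m k (ModuleCat.of R A) hm).out 1 3

lemma le_depth_iff [IsNoetherianRing R] [Module.Finite R A] (hm : m • (⊤ : Submodule R A) < ⊤)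
    (k : ℕ) : (k : ℕ∞) ≤ moduleDepth m A ↔ EV m k A := by
  constructor
  · intro h
    by_contra hk
    have hk0 : k ≠ 0 := by
      rintro rfl; exact hk (fun i hi => by omega)
    have : moduleDepth m A ≤ ((k - 1 : ℕ) : ℕ∞) := by
      refine sSup_le ?_
      rintro _ ⟨rs, rfl, h1, h2⟩
      have := (exists_reg_iff hm rs.length).2 ⟨rs, rfl, h1, h2⟩
      have hlt : rs.length < k := by
        by_contra hh
        exact hk (this.mono (by omega))
      exact_mod_cast (by omega : rs.length ≤ k - 1)
    have := h.trans this
    have : k ≤ k - 1 := by exact_mod_cast this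
    omega
  · intro h
    obtain ⟨rs, h1, h2, h3⟩ := (exists_reg_iff hm k).1 h
    exact le_sSup ⟨rs, by rw [h1], h2, h3⟩

lemma depth_eq_iff [IsNoetherianRing R] [Module.Finite R A] (hm : m • (⊤ : Submodule R A) < ⊤)
    (k : ℕ) : moduleDepth m A = (k : ℕ∞) ↔ EV m k A ∧ ¬ EV m (k + 1) A := by
  rw [← le_depth_iff hm, ← le_depth_iff hm]
  constructor
  · intro h
    rw [h]
    refine ⟨le_rfl, ?_⟩
    intro h
    have : k + 1 ≤ k := by exact_mod_cast h
    omega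
  · rintro ⟨h1, h2⟩
    refine le_antisymm ?_ h1
    rw [not_le] at h2
    push_cast at h2
    exact Order.le_of_lt_add_one h2

end Homological

section Monomial
variable {K : Type} [Field K] {n : ℕ}

local notation "SS" => MvPolynomial (Fin n) K

/-- Set the variables outside `T` to zero. -/
noncomputable def phi (K : Type) [Field K] {n : ℕ} (T : Finset (Fin n)) :
    MvPolynomial (Fin n) K →ₐ[K] MvPolynomial (Fin n) K :=
  aeval (fun i => if i ∈ T then X i else 0)

/-- The prime generated by the variables outside `T`. -/
noncomputable def PT (K : Type) [Field K] {n : ℕ} (T : Finset (Fin n)) :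
    Ideal (MvPolynomial (Fin n) K) := RingHom.ker (phi K T)

instance PT_prime (T : Finset (Fin n)) : (PT K T).IsPrime := RingHom.ker_isPrime _

lemma sqMon_mem_PT (T W : Finset (Fin n)) : sqMon K W ∈ PT K T ↔ ¬ W ⊆ T := by
  rw [PT, RingHom.mem_ker, sqMon, map_prod, Finset.prod_eq_zero_iff, Finset.not_subset]
  refine exists_congr fun i => and_congr_right fun _ => ?_
  simp only [phi, aeval_X]
  split_ifs with h <;> simp [h]

lemma X_mem_PT (T : Finset (Fin n)) (i : Fin n) : (X i : SS) ∈ PT K T ↔ i ∉ T := by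
  have := sqMon_mem_PT (K := K) T {i}
  simpa [sqMon] using this

lemma sub_phi_mem (T : Finset (Fin n)) (Q : Ideal SS) (hQ : ∀ i, i ∉ T → (X i : SS) ∈ Q)
    (f : SS) : f - phi K T f ∈ Q := by
  have : (Ideal.Quotient.mkₐ K Q).comp (phi K T) = Ideal.Quotient.mkₐ K Q := by
    ext i
    simp only [AlgHom.comp_apply, phi, aeval_X]
    split_ifs with h
    · rfl
    · rw [map_zero]; exact (Ideal.Quotient.eq_zero_iff_mem.2 (hQ i h)).symm
  exact Ideal.Quotient.eq.1 (DFunLike.congr_fun this f).symm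

lemma PT_le (T : Finset (Fin n)) (Q : Ideal SS) (hQ : ∀ i, i ∉ T → (X i : SS) ∈ Q) :
    PT K T ≤ Q := by
  intro f hf
  have := sub_phi_mem T Q hQ f
  rwa [(RingHom.mem_ker.1 hf : phi K T f = 0), sub_zero] at this

lemma X_mem_max (i : Fin n) : (X i : SS) ∈ maxGraded K n :=
  Ideal.subset_span ⟨i, rfl⟩

lemma PT_mono {T W : Finset (Fin n)} (h : W ⊆ T) : PT K T ≤ PT K W :=
  PT_le _ _ fun i hi => (X_mem_PT _ _).2 fun hh => hi (h hh)

lemma EV_PT (T : Finset (Fin n)) : EV (maxGraded K n) T.card (SS ⧸ PT K T) := by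
  induction T using Finset.induction_on with
  | empty => intro i hi; simp at hi
  | insert i T hi ih =>
    rw [Finset.card_insert_of_notMem hi]
    have hle : PT K (insert i T) ≤ PT K T := PT_mono (Finset.subset_insert _ _)
    have hle' : PT K (insert i T) ≤ Submodule.comap (LinearMap.id : SS →ₗ[SS] SS) (PT K T) := by
      rw [Submodule.comap_id]; exact hle
    refine EV.succ (X i) (X_mem_max i) (Submodule.mapQ _ _ LinearMap.id hle') ?_ ?_ ?_ ih
    · rw [← LinearMap.ker_eq_bot, LinearMap.ker_eq_bot']
      intro x hx
      obtain ⟨f, rfl⟩ := Ideal.Quotient.mk_surjective x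
      have h2 : (X i : SS) * f ∈ PT K (insert i T) := Ideal.Quotient.eq_zero_iff_mem.1 hx
      rcases Ideal.IsPrime.mem_or_mem inferInstance h2 with h | h
      · rw [X_mem_PT] at h; simp at h
      · exact Ideal.Quotient.eq_zero_iff_mem.2 h
    · intro x
      obtain ⟨f, rfl⟩ := Ideal.Quotient.mk_surjective x
      exact ⟨Ideal.Quotient.mk _ f, rfl⟩
    · intro x
      obtain ⟨f, rfl⟩ := Ideal.Quotient.mk_surjective x
      constructor
      · intro hx
        have hf : f ∈ PT K T := Ideal.Quotient.eq_zero_iff_mem.1 hx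
        have hT : PT K T ≤ PT K (insert i T) ⊔ Ideal.span {(X i : SS)} := by
          refine PT_le _ _ fun j hj => ?_
          by_cases hji : j = i
          · subst hji
            exact Ideal.mem_sup_right (Ideal.mem_span_singleton_self _)
          · exact Ideal.mem_sup_left ((X_mem_PT _ _).2 (by simp [hji, hj]))
        obtain ⟨a, ha, b, hb, hab⟩ := Submodule.mem_sup.1 (hT hf)
        obtain ⟨c, rfl⟩ := Ideal.mem_span_singleton'.1 hb
        refine ⟨Ideal.Quotient.mk _ c, ?_⟩
        change Ideal.Quotient.mk _ (X i * c) = _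
        rw [Ideal.Quotient.eq, ← hab]
        have : X i * c - (a + c * X i) = -a := by ring
        rw [this]
        exact neg_mem ha
      · rintro ⟨y, hy⟩
        obtain ⟨c, rfl⟩ := Ideal.Quotient.mk_surjective y
        rw [← hy]
        change Ideal.Quotient.mk _ (X i * c) = 0
        rw [Ideal.Quotient.eq_zero_iff_mem]
        exact Ideal.mul_mem_right _ _ ((X_mem_PT _ _).2 hi)

/-- Square-free monomial ideals. -/
def SqF (A : Ideal (MvPolynomial (Fin n) K)) : Prop :=
  A ≤ Ideal.span (sqMon K '' {T | sqMon K T ∈ A})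

lemma SqF.le_iff {A B : Ideal SS} (hA : SqF A) : A ≤ B ↔ ∀ T, sqMon K T ∈ A → sqMon K T ∈ B := by
  refine ⟨fun h T hT => h hT, fun h => hA.trans ?_⟩
  rw [Ideal.span_le]
  rintro _ ⟨T, hT, rfl⟩
  exact h T hT

lemma sqMon_mul (T W : Finset (Fin n)) (h : W ⊆ T) : sqMon K T = sqMon K (T \ W) * sqMon K W := by
  rw [sqMon, sqMon, sqMon, Finset.prod_sdiff h]

lemma sqMon_mem_of_subset {A : Ideal SS} {T W : Finset (Fin n)} (h : W ⊆ T)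
    (hW : sqMon K W ∈ A) : sqMon K T ∈ A := by
  rw [sqMon_mul T W h]; exact Ideal.mul_mem_left _ _ hW

lemma SqF.le_PT {A : Ideal SS} (hA : SqF A) {T : Finset (Fin n)} (hT : sqMon K T ∉ A) :
    A ≤ PT K T :=
  hA.le_iff.2 fun _ hW => (sqMon_mem_PT _ _).2 fun h => hT (sqMon_mem_of_subset h hW)

lemma GenBySqMonOfDeg.sqF {P : ℕ → Prop} {A : Ideal SS} (h : GenBySqMonOfDeg K P A) : SqF A := by
  obtain ⟨G, -, rfl⟩ := h
  exact Ideal.span_mono (Set.image_mono fun T hT => Ideal.subset_span ⟨T, hT, rfl⟩)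

lemma SqF.sup {A B : Ideal SS} (hA : SqF A) (hB : SqF B) : SqF (A ⊔ B) := by
  refine sup_le (hA.trans ?_) (hB.trans ?_)
  · exact Ideal.span_mono (Set.image_mono fun T hT => Ideal.mem_sup_left hT)
  · exact Ideal.span_mono (Set.image_mono fun T hT => Ideal.mem_sup_right hT)

lemma SqF.single (T : Finset (Fin n)) : SqF (Ideal.span {sqMon K T}) := by
  unfold SqF
  rw [Ideal.span_le, Set.singleton_subset_iff]
  exact Ideal.subset_span ⟨T, Ideal.mem_span_singleton_self _, rfl⟩

/-- Degree bound on members of a sum. -/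
lemma card_of_mem_span {G : Set (Finset (Fin n))} {A : Ideal SS} (hA : A = Ideal.span (sqMon K '' G))
    {T : Finset (Fin n)} (hT : sqMon K T ∈ A) : ∃ W ∈ G, W ⊆ T := by
  by_contra! h
  have : A ≤ PT K T := by
    rw [hA, Ideal.span_le]
    rintro _ ⟨W, hW, rfl⟩
    exact (sqMon_mem_PT _ _).2 (h W hW)
  exact (sqMon_mem_PT T T).1 (this hT) (Finset.Subset.refl _)

lemma EV_idealQuot (k : ℕ) (A : Ideal SS) (hA : SqF A) : ∀ (N : ℕ) (B : Ideal SS), SqF B → B ≤ A →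
    (∀ T, sqMon K T ∈ A → sqMon K T ∉ B → k ≤ T.card) →
    Set.ncard {T : Finset (Fin n) | sqMon K T ∈ A ∧ sqMon K T ∉ B} = N →
    EV (maxGraded K n) k (idealQuot A B) := by
  intro N
  induction N using Nat.strong_induction_on with
  | _ N ih =>
  intro B hB hBA hk hN
  by_cases hne : {T : Finset (Fin n) | sqMon K T ∈ A ∧ sqMon K T ∉ B}.Nonempty
  swap
  · have hAB : A ≤ B := hA.le_iff.2 fun T hT => by
      by_contra hTB; exact hne ⟨T, hT, hTB⟩
    have : Subsingleton (idealQuot A B) := by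
      rw [Submodule.Quotient.subsingleton_iff, eq_top_iff]
      intro x _
      exact hAB x.2
    exact EV.of_subsingleton k
  obtain ⟨T, ⟨hTA, hTB⟩, hmax⟩ := Set.exists_max_image _ Finset.card (Set.toFinite _) hne
  have hPB : B ≤ PT K T := hB.le_PT hTB
  set B' : Ideal SS := B ⊔ Ideal.span {sqMon K T} with hB'
  have hTB' : sqMon K T ∈ B' := Ideal.mem_sup_right (Ideal.mem_span_singleton_self _)
  have hBB' : B ≤ B' := le_sup_left
  have ih' : EV (maxGraded K n) k (idealQuot A B') := by
    refine ih _ ?_ B' (hB.sup (SqF.single T)) ?_ ?_ rfl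
    · rw [← hN]
      refine Set.ncard_lt_ncard ⟨?_, ?_⟩ (Set.toFinite _)
      · exact fun W hW => ⟨hW.1, fun h => hW.2 (hBB' h)⟩
      · intro h
        exact (h ⟨hTA, hTB⟩ : sqMon K T ∈ A ∧ sqMon K T ∉ B').2 hTB'
    · refine sup_le hBA ?_
      rw [Ideal.span_le, Set.singleton_subset_iff]; exact hTA
    · exact fun W h1 h2 => hk W h1 fun h => h2 (hBB' h)
  have hcol : PT K T ≤ Submodule.comap (LinearMap.toSpanSingleton SS A ⟨sqMon K T, hTA⟩)
      (Submodule.comap A.subtype (B : Submodule SS SS)) := by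
    refine PT_le T _ fun i hi => ?_
    change (X i : SS) * sqMon K T ∈ B
    have hins : (X i : SS) * sqMon K T = sqMon K (insert i T) := by
      rw [sqMon, sqMon, Finset.prod_insert hi]
    rw [hins]
    by_contra hcon
    have := hmax (insert i T) ⟨sqMon_mem_of_subset (Finset.subset_insert _ _) hTA, hcon⟩
    rw [Finset.card_insert_of_notMem hi] at this
    omega
  refine EV.middle (A := SS ⧸ PT K T) (C := idealQuot A B') (Submodule.mapQ _ _ _ hcol)
    (Submodule.mapQ _ _ LinearMap.id (fun x hx => hBB' hx)) ?_ ?_ ?_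
    ((EV_PT T).mono (hk T hTA hTB)) ih'
  · rw [← LinearMap.ker_eq_bot, LinearMap.ker_eq_bot']
    intro x hx
    obtain ⟨f, rfl⟩ := Submodule.Quotient.mk_surjective _ x
    rw [Submodule.mapQ_apply, Submodule.Quotient.mk_eq_zero] at hx
    have h2 : f * sqMon K T ∈ PT K T := hPB hx
    rw [Submodule.Quotient.mk_eq_zero]
    rcases Ideal.IsPrime.mem_or_mem inferInstance h2 with h | h
    · exact h
    · exact absurd (Finset.Subset.refl _) ((sqMon_mem_PT _ _).1 h)
  · intro x
    obtain ⟨f, rfl⟩ := Submodule.Quotient.mk_surjective _ x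
    exact ⟨Submodule.Quotient.mk f, rfl⟩
  · intro x
    obtain ⟨f, rfl⟩ := Submodule.Quotient.mk_surjective _ x
    rw [Submodule.mapQ_apply, Submodule.Quotient.mk_eq_zero]
    constructor
    · intro hx
      have hx' : (f : SS) ∈ B' := hx
      obtain ⟨a, ha, b, hb, hab⟩ := Submodule.mem_sup.1 hx'
      obtain ⟨c, rfl⟩ := Ideal.mem_span_singleton'.1 hb
      refine ⟨Submodule.Quotient.mk c, ?_⟩
      rw [Submodule.mapQ_apply, Submodule.Quotient.eq]
      change c * sqMon K T - f ∈ B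
      rw [← hab]
      have : c * sqMon K T - (a + c * sqMon K T) = -a := by ring
      rw [this]
      exact neg_mem ha
    · rintro ⟨y, hy⟩
      obtain ⟨c, rfl⟩ := Submodule.Quotient.mk_surjective _ y
      rw [Submodule.mapQ_apply, Submodule.Quotient.eq] at hy
      have hy' : c * sqMon K T - f ∈ B := hy
      change (f : SS) ∈ B'
      have : (f : SS) = c * sqMon K T - (c * sqMon K T - f) := by ring
      rw [this]
      exact sub_mem (Ideal.mul_mem_left _ _ hTB') (hBB' hy')

lemma smul_lt (A B : Ideal SS) (hB : SqF B) {T : Finset (Fin n)} (hTA : sqMon K T ∈ A)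
    (hTB : sqMon K T ∉ B) :
    maxGraded K n • (⊤ : Submodule SS (idealQuot A B)) < ⊤ := by
  rw [lt_top_iff_ne_top]
  intro h
  obtain ⟨r, hr, hrs⟩ := Submodule.exists_mem_and_smul_eq_self_of_fg_of_le_smul (maxGraded K n)
    (⊤ : Submodule SS (idealQuot A B)) Module.Finite.fg_top h.ge
  have h1 := hrs (Submodule.Quotient.mk ⟨sqMon K T, hTA⟩) trivial
  rw [← Submodule.Quotient.mk_smul, Submodule.Quotient.eq] at h1
  have h2 : r * sqMon K T - sqMon K T ∈ B := h1
  have h3 : (r - 1) * sqMon K T ∈ PT K T := by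
    rw [sub_mul, one_mul]; exact hB.le_PT hTB h2
  have hm : maxGraded K n ≤ PT K (∅ : Finset (Fin n)) := by
    rw [maxGraded, Ideal.span_le]
    rintro _ ⟨i, rfl⟩
    exact (X_mem_PT _ _).2 (by simp)
  have h4 : r - 1 ∈ PT K (∅ : Finset (Fin n)) := by
    rcases Ideal.IsPrime.mem_or_mem inferInstance h3 with h | h
    · exact PT_mono (Finset.empty_subset _) h
    · exact absurd (Finset.Subset.refl _) ((sqMon_mem_PT _ _).1 h)
  have h5 : (1 : SS) ∈ PT K (∅ : Finset (Fin n)) := by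
    have := sub_mem (hm hr) h4
    simpa using this
  exact (inferInstance : (PT K (∅ : Finset (Fin n))).IsPrime).ne_top
    ((Ideal.eq_top_iff_one _).2 h5)

lemma sub_exact (A B C : Ideal SS) (hAB : A ≤ B) (hBC : B ≤ C) :
    ∃ (f : idealQuot B A →ₗ[SS] idealQuot C A) (g : idealQuot C A →ₗ[SS] idealQuot C B),
      Function.Injective f ∧ Function.Surjective g ∧ Function.Exact f g := by
  have h1 : Submodule.comap B.subtype (A : Submodule SS SS) ≤
      Submodule.comap (Submodule.inclusion hBC)
        (Submodule.comap C.subtype (A : Submodule SS SS)) := by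
    intro x hx
    rw [Submodule.mem_comap] at hx ⊢
    exact hx
  refine ⟨Submodule.mapQ _ _ (Submodule.inclusion hBC) h1,
    Submodule.mapQ _ _ LinearMap.id (fun x hx => hAB hx), ?_, ?_, ?_⟩
  · rw [← LinearMap.ker_eq_bot, LinearMap.ker_eq_bot']
    intro x hx
    obtain ⟨f, rfl⟩ := Submodule.Quotient.mk_surjective _ x
    rw [Submodule.mapQ_apply, Submodule.Quotient.mk_eq_zero] at hx
    rw [Submodule.Quotient.mk_eq_zero]
    exact hx
  · intro x
    obtain ⟨f, rfl⟩ := Submodule.Quotient.mk_surjective _ x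
    exact ⟨Submodule.Quotient.mk f, rfl⟩
  · intro x
    obtain ⟨f, rfl⟩ := Submodule.Quotient.mk_surjective _ x
    rw [Submodule.mapQ_apply, Submodule.Quotient.mk_eq_zero]
    constructor
    · intro hx
      exact ⟨Submodule.Quotient.mk ⟨f, hx⟩, rfl⟩
    · rintro ⟨y, hy⟩
      obtain ⟨c, rfl⟩ := Submodule.Quotient.mk_surjective _ y
      rw [Submodule.mapQ_apply, Submodule.Quotient.eq] at hy
      have hy' : (c : SS) - f ∈ A := hy
      change (f : SS) ∈ B
      have : (f : SS) = c - (c - f) := by ring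
      rw [this]
      exact sub_mem c.2 (hAB hy')

end Monomial

/-- Lemma 1.2. -/
theorem stmt_1 (n : ℕ) (K : Type) [Field K] (d : ℕ) (hd : 0 < d)
    (I J E F : Ideal (MvPolynomial (Fin n) K)) (hI0 : I ≠ ⊥) (hJ0 : J ≠ ⊥)
    (hJI : J < I) (hI : GenBySqMonOfDeg K (fun k => d ≤ k) I)
    (hJEF : J = E + F) (hFE : ¬ F ≤ E)
    (hE : GenBySqMonOfDeg K (fun k => k = d + 1) E)
    (hF : GenBySqMonOfDeg K (fun k => d + 1 < k) F) :
    moduleDepth (maxGraded K n) (idealQuot I J) = (d : ℕ∞) ↔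
      moduleDepth (maxGraded K n) (idealQuot I E) = (d : ℕ∞) := by
  have hIs := hI.sqF
  have hEs := hE.sqF
  have hFs := hF.sqF
  have hEJ : E ≤ J := by rw [hJEF]; exact le_sup_left
  have hJs : SqF J := by rw [hJEF]; exact hEs.sup hFs
  obtain ⟨T, hTI, hTJ⟩ : ∃ T, sqMon K T ∈ I ∧ sqMon K T ∉ J := by
    by_contra! h
    exact hJI.not_ge (hIs.le_iff.2 h)
  have hdI : ∀ T, sqMon K T ∈ I → d ≤ T.card := by
    intro T hT
    obtain ⟨G, hG, hIG⟩ := hI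
    obtain ⟨W, hW, hWT⟩ := card_of_mem_span hIG hT
    exact (hG W hW).trans (Finset.card_le_card hWT)
  have hdJ : ∀ T, sqMon K T ∈ J → sqMon K T ∉ E → d + 1 + 1 ≤ T.card := by
    intro T hT hTE
    obtain ⟨G, hG, hEG⟩ := hE
    obtain ⟨G', hG', hFG⟩ := hF
    have hJG : J = Ideal.span (sqMon K '' (G ∪ G')) := by
      rw [Set.image_union, Ideal.span_union, ← hEG, ← hFG, hJEF]; rfl
    obtain ⟨W, hW | hW, hWT⟩ := card_of_mem_span hJG hT
    · refine absurd (sqMon_mem_of_subset hWT ?_) hTE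
      rw [hEG]
      exact Ideal.subset_span ⟨W, hW, rfl⟩
    · have h1 := hG' W hW
      have h2 := Finset.card_le_card hWT
      simp only at h1
      omega
  have e1 : EV (maxGraded K n) (d + 1 + 1) (idealQuot J E) :=
    EV_idealQuot _ J hJs _ E hEs hEJ hdJ rfl
  have e2 : EV (maxGraded K n) d (idealQuot I J) :=
    EV_idealQuot _ I hIs _ J hJs hJI.le (fun T h _ => hdI T h) rfl
  have e3 : EV (maxGraded K n) d (idealQuot I E) :=
    EV_idealQuot _ I hIs _ E hEs (hEJ.trans hJI.le) (fun T h _ => hdI T h) rfl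
  rw [depth_eq_iff (smul_lt I J hJs hTI hTJ),
    depth_eq_iff (smul_lt I E hEs hTI fun h => hTJ (hEJ h))]
  obtain ⟨f, g, hf, hg, hfg⟩ := sub_exact E J I hEJ hJI.le
  have key : EV (maxGraded K n) (d + 1) (idealQuot I J) ↔
      EV (maxGraded K n) (d + 1) (idealQuot I E) :=
    ⟨fun h => EV.middle f g hf hg hfg (e1.mono (by omega)) h,
      fun h => EV.right f g hf hg hfg e1 h⟩
  simp only [e2, e3, key]
end
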